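/- For every (t, x) ∈ (0, +∞) × (0, +∞) there exists a unique pair (q₀, p₀) belonging to ([0, +∞) × {2}) ∪ ({0} × (0, 2]) such that F_q(t, q₀, p₀) = x and F_q(s, q₀, p₀) > 0 for all s ∈ (0, t). This defines a map Δ : (0, +∞)² → ([0, +∞) × {2}) ∪ ({0} × (0, 2]). -/

import Mathlib

open Real Set Filter MeasureTheory
open scoped Topology

/-- The potential `g` from the Hamiltonian `H(x,p) = p²/2 + g(x)`. -/
noncomputable def g (x : ℝ) : ℝ := if |x| ≤ 1 then 1 - (1 - x ^ 2) ^ 4 else 1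

/-- The derivative of `g`. -/
noncomputable def g' (x : ℝ) : ℝ := if |x| ≤ 1 then 8 * x * (1 - x ^ 2) ^ 3 else 0

/-- `(q, p)` is a (global) solution of the Hamiltonian system (HS): `q̇ = p`, `ṗ = -g'(q)`. -/
def IsHSSol (q p : ℝ → ℝ) : Prop :=
  (∀ t : ℝ, HasDerivAt q (p t) t) ∧ (∀ t : ℝ, HasDerivAt p (-(g' (q t))) t)

/-- `F` is the flow of (HS): `F t q₀ p₀ = (q t, p t)` for the solution with data `(q₀, p₀)`. -/
def IsHSFlow (F : ℝ → ℝ → ℝ → ℝ × ℝ) : Prop :=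
  ∀ q₀ p₀ : ℝ,
    IsHSSol (fun t => (F t q₀ p₀).1) (fun t => (F t q₀ p₀).2) ∧ F 0 q₀ p₀ = (q₀, p₀)

/-- The set `([0,∞) × {2}) ∪ ({0} × (0,2])`, codomain of the map `Δ`. -/
def Dset : Set (ℝ × ℝ) := (Ici (0:ℝ) ×ˢ ({2} : Set ℝ)) ∪ ({(0:ℝ)} ×ˢ Ioc (0:ℝ) 2)

/-- `T` is the smallest positive period of `q`. -/
def IsSmallestPeriod (q : ℝ → ℝ) (T : ℝ) : Prop :=
  0 < T ∧ Function.Periodic q T ∧ ∀ T' : ℝ, 0 < T' → Function.Periodic q T' → T ≤ T'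

/-- `T` is the period map `𝒯`, assigning to `p₀ ∈ (0, √2)` the smallest positive period of
the `q`-component of the solution of (HS) with initial datum `(0, p₀)`. -/
def IsPeriodMap (F : ℝ → ℝ → ℝ → ℝ × ℝ) (T : ℝ → ℝ) : Prop :=
  ∀ p₀ ∈ Ioo (0:ℝ) (Real.sqrt 2), IsSmallestPeriod (fun t => (F t 0 p₀).1) (T p₀)

/-- `Δ` associates to `(t,x)` the datum in `Dset` whose orbit stays positive on `(0,t)`
and reaches `x` at time `t`. -/
def IsDeltaMap (F : ℝ → ℝ → ℝ → ℝ × ℝ) (Δ : ℝ → ℝ → ℝ × ℝ) : Prop :=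
  ∀ t x : ℝ, 0 < t → 0 < x →
    Δ t x ∈ Dset ∧ (F t (Δ t x).1 (Δ t x).2).1 = x ∧
      ∀ s ∈ Ioo (0:ℝ) t, 0 < (F s (Δ t x).1 (Δ t x).2).1

/-- The solution `u` of the conservation law built from the flow `F` and the map `Δ`
(extended by `0` at `x = 0`). -/
noncomputable def usol (F : ℝ → ℝ → ℝ → ℝ × ℝ) (Δ : ℝ → ℝ → ℝ × ℝ) (t x : ℝ) : ℝ :=
  if 0 < x then (F t (Δ t x).1 (Δ t x).2).2
  else if x < 0 then -(F t (Δ t (-x)).1 (Δ t (-x)).2).2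
  else 0


noncomputable def mm (x : ℝ) : ℝ := max (1 - x ^ 2) 0

lemma g_eq (x : ℝ) : g x = 1 - mm x ^ 4 := by
  unfold g mm
  split_ifs with h
  · have : x ^ 2 ≤ 1 := by rw [← sq_abs]; nlinarith [abs_nonneg x]
    rw [max_eq_left (by linarith)]
  · have : 1 < x ^ 2 := by rw [← sq_abs]; nlinarith [abs_nonneg x]
    rw [max_eq_right (by linarith)]; ring

lemma g'_eq (x : ℝ) : g' x = 8 * x * mm x ^ 3 := by
  unfold g' mm
  split_ifs with h
  · have : x ^ 2 ≤ 1 := by rw [← sq_abs]; nlinarith [abs_nonneg x]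
    rw [max_eq_left (by linarith)]
  · have : 1 < x ^ 2 := by rw [← sq_abs]; nlinarith [abs_nonneg x]
    rw [max_eq_right (by linarith)]; ring

lemma mm_nonneg (x : ℝ) : 0 ≤ mm x := le_max_right _ _

lemma mm_le_one (x : ℝ) : mm x ≤ 1 := max_le (by nlinarith [sq_nonneg x]) (by norm_num)

lemma mm_anti {x y : ℝ} (hx : 0 ≤ x) (hxy : x ≤ y) : mm y ≤ mm x := by
  unfold mm
  exact max_le_max (by nlinarith) le_rfl

lemma g_mono {x y : ℝ} (hx : 0 ≤ x) (hxy : x ≤ y) : g x ≤ g y := by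
  rw [g_eq, g_eq]
  have := pow_le_pow_left₀ (mm_nonneg y) (mm_anti hx hxy) 4
  linarith

lemma g_nonneg (x : ℝ) : 0 ≤ g x := by
  rw [g_eq]; have := pow_le_one₀ (n := 4) (mm_nonneg x) (mm_le_one x); linarith

lemma g_le_one (x : ℝ) : g x ≤ 1 := by
  rw [g_eq]; have := pow_nonneg (mm_nonneg x) 4; linarith

lemma g_zero : g 0 = 0 := by simp [g]

lemma hasDerivAt_max4 (u : ℝ) :
    HasDerivAt (fun u : ℝ => max u 0 ^ 4) (4 * max u 0 ^ 3) u := by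
  rcases lt_trichotomy u 0 with h | h | h
  · rw [max_eq_right h.le]
    have : HasDerivAt (fun _ : ℝ => (0:ℝ)) 0 u := hasDerivAt_const _ _
    refine (this.congr_of_eventuallyEq ?_).congr_deriv (by norm_num)
    filter_upwards [Iio_mem_nhds h] with y hy
    rw [max_eq_right (le_of_lt hy)]; norm_num
  · subst h
    have h1 : HasDerivWithinAt (fun u : ℝ => max u 0 ^ 4) 0 (Iic 0) 0 := by
      refine (hasDerivWithinAt_const (0:ℝ) (Iic 0) (0:ℝ)).congr ?_ (by norm_num)
      intro y hy
      rw [max_eq_right hy]; norm_num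
    have h2 : HasDerivWithinAt (fun u : ℝ => max u 0 ^ 4) 0 (Ici 0) 0 := by
      have h3 : HasDerivAt (fun u : ℝ => u ^ 4) 0 (0:ℝ) := by
        simpa using hasDerivAt_pow 4 (0:ℝ)
      refine h3.hasDerivWithinAt.congr ?_ (by norm_num)
      intro y hy
      rw [max_eq_left hy]
    have := h1.union h2
    rw [Iic_union_Ici, hasDerivWithinAt_univ] at this
    exact this.congr_deriv (by norm_num)
  · rw [max_eq_left h.le]
    have h3 : HasDerivAt (fun u : ℝ => u ^ 4) (4 * u ^ 3) u := by
        simpa using hasDerivAt_pow 4 u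
    refine (h3.congr_of_eventuallyEq ?_)
    filter_upwards [Ioi_mem_nhds h] with y hy
    rw [max_eq_left (le_of_lt hy)]

lemma hasDerivAt_g (x : ℝ) : HasDerivAt g (g' x) x := by
  have h0 : HasDerivAt (fun x : ℝ => 1 - x ^ 2) (-(2 * x)) x := by
    simpa using (hasDerivAt_pow 2 x).const_sub 1
  have h1 := ((hasDerivAt_max4 (1 - x ^ 2)).comp x h0).const_sub 1
  have h2 : g = fun x => 1 - max (1 - x ^ 2) 0 ^ 4 := by
    funext y; rw [g_eq]; rfl
  rw [h2]
  refine h1.congr_deriv ?_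
  rw [g'_eq]; unfold mm; ring

lemma g'_lip : LipschitzWith 64 g' := by
  have h1 : ∀ x, g' x = (fun y : ℝ => 8 * y * (1 - y ^ 2) ^ 3) (max (-1) (min x 1)) := by
    intro x
    unfold g'
    split_ifs with h
    · rw [abs_le] at h
      rw [min_eq_left h.2, max_eq_right h.1]
    · rw [abs_le, not_and_or] at h
      rcases h with h | h
      · rw [max_eq_left]
        · norm_num
        · exact (min_le_left _ _).trans (by linarith)
      · rw [min_eq_right (by linarith)]; norm_num
  have h2 : ∀ x ∈ Icc (-1:ℝ) 1, ∀ y ∈ Icc (-1:ℝ) 1,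
      ‖8 * y * (1 - y ^ 2) ^ 3 - 8 * x * (1 - x ^ 2) ^ 3‖ ≤ 64 * ‖y - x‖ := by
    intro x hx y hy
    refine Convex.norm_image_sub_le_of_norm_hasDerivWithin_le
      (f := fun y : ℝ => 8 * y * (1 - y ^ 2) ^ 3)
      (f' := fun y => 8 * (1 - y ^ 2) ^ 3 - 48 * y ^ 2 * (1 - y ^ 2) ^ 2)
      ?_ ?_ (convex_Icc _ _) hx hy
    · intro z hz
      have h0 : HasDerivAt (fun x : ℝ => 1 - x ^ 2) (-(2 * z)) z := by
        simpa using (hasDerivAt_pow 2 z).const_sub 1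
      have h3 := ((hasDerivAt_id z).const_mul 8).mul (h0.pow 3)
      refine (h3.congr_deriv ?_).hasDerivWithinAt
      simp; ring
    · intro z hz
      have hz2 : z ^ 2 ≤ 1 := by nlinarith [hz.1, hz.2]
      have a0 : 0 ≤ 1 - z ^ 2 := by linarith
      have a1 : 1 - z ^ 2 ≤ 1 := by nlinarith [sq_nonneg z]
      have b2 := pow_le_one₀ (n := 2) a0 a1
      have b3 := pow_le_one₀ (n := 3) a0 a1
      have c2 := pow_nonneg a0 2
      have c3 := pow_nonneg a0 3
      have d := mul_le_one₀ hz2 c2 b2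
      have d' := mul_nonneg (sq_nonneg z) c2
      rw [Real.norm_eq_abs, abs_le]
      constructor <;> nlinarith
  refine LipschitzWith.of_dist_le_mul fun x y => ?_
  rw [h1, h1, dist_eq_norm, dist_eq_norm]
  have hm : ∀ x : ℝ, max (-1) (min x 1) ∈ Icc (-1:ℝ) 1 := fun x =>
    ⟨le_max_left _ _, max_le (by norm_num) (min_le_right _ _)⟩
  refine (h2 _ (hm y) _ (hm x)).trans ?_
  have : ‖max (-1) (min x 1) - max (-1) (min y 1)‖ ≤ ‖x - y‖ := by
    have e1 := abs_max_sub_max_le_max (-1) (min x 1) (-1) (min y 1)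
    have e2 := abs_min_sub_min_le_max x 1 y 1
    simp at e1 e2
    exact e1.trans e2
  simp only [NNReal.coe_ofNat]
  linarith

lemma g'_abs_le (x : ℝ) : g' x ≤ 8 := by
  unfold g'
  split_ifs with h
  · have hx := abs_le.1 h
    have hz2 : x ^ 2 ≤ 1 := by nlinarith [hx.1, hx.2]
    have a0 : 0 ≤ 1 - x ^ 2 := by linarith
    have a1 : 1 - x ^ 2 ≤ 1 := by nlinarith [sq_nonneg x]
    have b3 := pow_le_one₀ (n := 3) a0 a1
    have c3 := pow_nonneg a0 3
    nlinarith [hx.1, hx.2]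
  · norm_num

noncomputable def vf (z : ℝ × ℝ) : ℝ × ℝ := (z.2, -(g' z.1))

lemma vf_lip : LipschitzWith 64 vf := by
  refine LipschitzWith.of_dist_le_mul fun x y => ?_
  have h1 := g'_lip.dist_le_mul x.1 y.1
  simp only [NNReal.coe_ofNat] at h1 ⊢
  have h2 : dist x.1 y.1 ≤ dist x y := by rw [Prod.dist_eq]; exact le_max_left _ _
  have h3 : dist x.2 y.2 ≤ dist x y := by rw [Prod.dist_eq]; exact le_max_right _ _
  have h4 : 0 ≤ dist x y := dist_nonneg
  rw [Prod.dist_eq]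
  refine max_le ?_ ?_
  · show dist x.2 y.2 ≤ _
    linarith
  · show dist (-(g' x.1)) (-(g' y.1)) ≤ _
    rw [dist_neg_neg]; linarith

section flow
variable {F : ℝ → ℝ → ℝ → ℝ × ℝ}

lemma F_deriv (hF : IsHSFlow F) (a b t : ℝ) :
    HasDerivAt (fun t => F t a b) (vf (F t a b)) t := by
  have h1 := (hF a b).1.1 t
  have h2 := (hF a b).1.2 t
  exact h1.prodMk h2

lemma F_cont (hF : IsHSFlow F) (a b : ℝ) : Continuous (fun t => F t a b) :=
  continuous_iff_continuousAt.2 fun t => (F_deriv hF a b t).continuousAt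

lemma F_unique (hF : IsHSFlow F) {a b c d t : ℝ} (h : F t a b = F t c d) : a = c ∧ b = d := by
  have := ODE_solution_unique_univ (v := fun _ => vf) (s := fun _ => univ) (K := 64)
    (f := fun t => F t a b) (g := fun t => F t c d) (t₀ := t)
    (fun t => vf_lip.lipschitzOnWith) (fun t => ⟨F_deriv hF a b t, trivial⟩)
    (fun t => ⟨F_deriv hF c d t, trivial⟩) h
  have h0 := congrFun this 0
  simp only [(hF a b).2, (hF c d).2, Prod.mk.injEq] at h0
  exact h0

lemma F_zero (hF : IsHSFlow F) (t : ℝ) : F t 0 0 = (0, 0) := by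
  have := ODE_solution_unique_univ (v := fun _ => vf) (s := fun _ => univ) (K := 64)
    (f := fun t => F t 0 0) (g := fun _ => ((0:ℝ), (0:ℝ))) (t₀ := 0)
    (fun t => vf_lip.lipschitzOnWith) (fun t => ⟨F_deriv hF 0 0 t, trivial⟩)
    (fun t => ⟨by
      have : vf (0, 0) = 0 := by simp [vf, g']
      show HasDerivAt _ (vf (0,0)) t
      rw [this]; exact hasDerivAt_const _ _, trivial⟩) (hF 0 0).2
  exact congrFun this t

lemma F_energy (hF : IsHSFlow F) (a b t : ℝ) :
    (F t a b).2 ^ 2 / 2 + g (F t a b).1 = b ^ 2 / 2 + g a := by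
  have hd : ∀ t, HasDerivAt (fun t => (F t a b).2 ^ 2 / 2 + g (F t a b).1) 0 t := by
    intro t
    have h1 := (hF a b).1.1 t
    have h2 := (hF a b).1.2 t
    have h3 := ((h2.pow 2).div_const 2).add ((hasDerivAt_g _).comp t h1)
    refine h3.congr_deriv ?_
    simp; ring
  have := is_const_of_deriv_eq_zero (fun t => (hd t).differentiableAt)
    (fun t => (hd t).deriv) t 0
  simpa [(hF a b).2] using this

lemma p_pos (hF : IsHSFlow F) (a t : ℝ) : 0 < (F t a 2).2 := by
  by_contra hc
  push Not at hc
  have hcont : Continuous (fun t => (F t a 2).2) := (F_cont hF a 2).snd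
  have h0 : (F 0 a 2).2 = 2 := by rw [(hF a 2).2]
  obtain ⟨s, hs⟩ := mem_range_of_exists_le_of_exists_ge hcont ⟨t, hc⟩
    ⟨0, by rw [h0]; norm_num⟩
  have hE := F_energy hF a 2 s
  simp only at hs
  rw [hs] at hE
  have := g_nonneg a
  have := g_le_one (F s a 2).1
  linarith

lemma q_ge (hF : IsHSFlow F) (a : ℝ) {t : ℝ} (ht : 0 < t) : a < (F t a 2).1 := by
  have hm : StrictMono (fun t => (F t a 2).1) := by
    apply strictMono_of_deriv_pos
    intro s
    rw [((hF a 2).1.1 s).deriv]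
    exact p_pos hF a s
  have := hm ht
  simpa [(hF a 2).2] using this

lemma p_lower (hF : IsHSFlow F) (b : ℝ) {t : ℝ} (ht : 0 ≤ t) : b - 8 * t ≤ (F t 0 b).2 := by
  have hd : ∀ s, HasDerivAt (fun s => (F s 0 b).2 + 8 * s) (-(g' (F s 0 b).1) + 8) s := by
    intro s
    have := ((hF 0 b).1.2 s).add ((hasDerivAt_id s).const_mul 8)
    exact this.congr_deriv (by simp)
  have hm : Monotone (fun s => (F s 0 b).2 + 8 * s) := by
    apply monotone_of_deriv_nonneg (fun s => (hd s).differentiableAt)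
    intro s
    rw [(hd s).deriv]
    linarith [g'_abs_le (F s 0 b).1]
  have := hm ht
  simp [(hF 0 b).2] at this
  linarith

lemma q_lower (hF : IsHSFlow F) (b : ℝ) {t : ℝ} (ht : 0 ≤ t) :
    b * t - 4 * t ^ 2 ≤ (F t 0 b).1 := by
  have hd : ∀ s, HasDerivAt (fun s => (F s 0 b).1 - (b * s - 4 * s ^ 2))
      ((F s 0 b).2 - (b - 8 * s)) s := by
    intro s
    have := ((hF 0 b).1.1 s).sub (((hasDerivAt_id s).const_mul b).sub
      ((hasDerivAt_pow 2 s).const_mul 4))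
    refine this.congr_deriv ?_
    simp; ring
  have hm : MonotoneOn (fun s => (F s 0 b).1 - (b * s - 4 * s ^ 2)) (Ici 0) := by
    apply monotoneOn_of_deriv_nonneg (convex_Ici 0)
      (fun s _ => (hd s).continuousAt.continuousWithinAt)
      (fun s _ => (hd s).differentiableAt.differentiableWithinAt)
    intro s hs
    rw [interior_Ici] at hs
    rw [(hd s).deriv]
    linarith [p_lower hF b (le_of_lt (show (0:ℝ) < s from hs))]
  have := hm (by simp) ht ht
  simp [(hF 0 b).2] at this
  linarith

lemma F_dist (hF : IsHSFlow F) {T : ℝ} (a b c d : ℝ) {t : ℝ} (ht : t ∈ Icc 0 T) :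
    dist (F t a b) (F t c d) ≤ Real.exp (64 * T) * dist (a, b) (c, d) := by
  have := dist_le_of_trajectories_ODE (v := fun _ => vf) (K := 64) (a := 0) (b := T)
    (f := fun t => F t a b) (g := fun t => F t c d) (δ := dist (a, b) (c, d))
    (fun _ => vf_lip) (F_cont hF a b).continuousOn
    (fun t _ => (F_deriv hF a b t).hasDerivWithinAt) (F_cont hF c d).continuousOn
    (fun t _ => (F_deriv hF c d t).hasDerivWithinAt)
    (by simp only [(hF a b).2, (hF c d).2]; exact le_rfl) t ht
  refine this.trans ?_
  rw [mul_comm]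
  gcongr
  · simpa using ht.1
  · simp
  · linarith [ht.2]

lemma F_joint (hF : IsHSFlow F) (T : ℝ) :
    ContinuousOn (fun z : (ℝ × ℝ) × ℝ => F z.2 z.1.1 z.1.2) (univ ×ˢ Icc 0 T) := by
  refine continuousOn_prod_of_continuousOn_lipschitzOnWith _ (Real.exp (64 * T)).toNNReal ?_ ?_
  · intro a _
    exact (F_cont hF a.1 a.2).continuousOn
  · intro t ht
    refine LipschitzOnWith.of_dist_le_mul fun x _ y _ => ?_
    rw [Real.coe_toNNReal _ (Real.exp_pos _).le]
    exact F_dist hF x.1 x.2 y.1 y.2 ht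

/-- parametrisation of the data set -/
noncomputable def cc (l : ℝ) : ℝ × ℝ := (max (l - 2) 0, min l 2)

noncomputable def QQ (F : ℝ → ℝ → ℝ → ℝ × ℝ) (t l : ℝ) : ℝ := (F t (cc l).1 (cc l).2).1

lemma cc_low {l : ℝ} (h : l ≤ 2) : cc l = (0, l) := by
  unfold cc; rw [max_eq_right (by linarith), min_eq_left h]

lemma cc_high {l : ℝ} (h : 2 ≤ l) : cc l = (l - 2, 2) := by
  unfold cc; rw [max_eq_left (by linarith), min_eq_right h]

lemma cc_cont : Continuous cc := by unfold cc; fun_prop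

lemma QQ_joint (hF : IsHSFlow F) (T : ℝ) :
    ContinuousOn (fun z : ℝ × ℝ => QQ F z.2 z.1) (univ ×ˢ Icc 0 T) := by
  have h := (F_joint hF T).comp (f := fun z : ℝ × ℝ => (cc z.1, z.2)) (s := univ ×ˢ Icc 0 T)
    ((cc_cont.comp continuous_fst).prodMk continuous_snd).continuousOn
    (fun z hz => ⟨trivial, hz.2⟩)
  exact continuous_fst.comp_continuousOn h

lemma cc_mem {l : ℝ} (h : 0 < l) : cc l ∈ Dset := by
  rcases le_total l 2 with h2 | h2
  · rw [cc_low h2]; right; exact ⟨rfl, h, h2⟩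
  · rw [cc_high h2]; left; exact ⟨by simpa using h2, rfl⟩

lemma mem_Dset {z : ℝ × ℝ} (h : z ∈ Dset) : ∃ l, 0 < l ∧ z = cc l := by
  obtain ⟨a, b⟩ := z
  rcases h with ⟨h1, h2⟩ | ⟨h1, h2⟩
  · simp at h1 h2
    refine ⟨a + 2, by linarith, ?_⟩
    rw [cc_high (by linarith), h2]; simp
  · simp at h1 h2
    refine ⟨b, h2.1, ?_⟩
    rw [cc_low h2.2, h1]

lemma exists_L (hF : IsHSFlow F) {t x : ℝ} (ht : 0 < t) (hx : 0 < x) :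
    ∃ l, 0 < l ∧ QQ F t l = x ∧ ∀ s ∈ Ioo 0 t, 0 < QQ F s l := by
  have hj := QQ_joint hF t
  let K : Set (ℝ × ℝ) := (Icc (0:ℝ) 2 ×ˢ Icc (0:ℝ) t) ∩
    {z | QQ F z.2 z.1 ≤ 0 ∧ z.1 ≤ 4 * z.2}
  have hKc : IsCompact K := by
    refine (isCompact_Icc.prod isCompact_Icc).of_isClosed_subset ?_ inter_subset_left
    have hcl : IsClosed (Icc (0:ℝ) 2 ×ˢ Icc (0:ℝ) t) := isClosed_Icc.prod isClosed_Icc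
    have h1 : IsClosed ((Icc (0:ℝ) 2 ×ˢ Icc (0:ℝ) t) ∩ (fun z : ℝ × ℝ => QQ F z.2 z.1) ⁻¹' Iic 0) :=
      (hj.mono (prod_mono (subset_univ _) le_rfl)).preimage_isClosed_of_isClosed hcl isClosed_Iic
    have h2 : IsClosed {z : ℝ × ℝ | z.1 ≤ 4 * z.2} :=
      isClosed_le continuous_fst (continuous_const.mul continuous_snd)
    convert h1.inter h2 using 1
    ext z; simp [K, and_assoc]
  have hK0 : ((0:ℝ), (0:ℝ)) ∈ K := by
    refine ⟨by simp [ht.le], ?_, by simp⟩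
    simp [QQ, cc, F_zero hF]
  obtain ⟨⟨m, s⟩, hmK, hmax⟩ := hKc.exists_isMaxOn ⟨_, hK0⟩ continuous_fst.continuousOn
  have hm0 : 0 ≤ m := hmK.1.1.1
  have hm2 : m ≤ 2 := hmK.1.1.2
  have hs0 : 0 ≤ s := hmK.1.2.1
  have hst : s ≤ t := hmK.1.2.2
  have hQ : QQ F s m ≤ 0 := hmK.2.1
  have hms : m ≤ 4 * s := hmK.2.2
  have habove : ∀ l, m < l → ∀ r ∈ Ioc 0 t, 0 < QQ F r l := by
    intro l hl r hr
    by_contra hc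
    push Not at hc
    rcases le_total l 2 with h2 | h2
    · have hlow := q_lower hF l hr.1.le
      have : QQ F r l = (F r 0 l).1 := by unfold QQ; rw [cc_low h2]
      have h4 : l ≤ 4 * r := by
        by_contra h5
        push Not at h5
        nlinarith [hr.1, mul_pos hr.1 (sub_pos.2 h5)]
      have : (l, r) ∈ K := ⟨⟨⟨by linarith, h2⟩, hr.1.le, hr.2⟩, hc, h4⟩
      have := hmax this
      simp at this
      linarith
    · have := q_ge hF (l - 2) hr.1
      have h6 : QQ F r l = (F r (l - 2) 2).1 := by unfold QQ; rw [cc_high h2]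
      linarith
  have hcl : ∀ r ∈ Icc 0 t, ContinuousOn (fun l => QQ F r l) univ := by
    intro r hr
    exact hj.comp (f := fun l => (l, r)) (by fun_prop) (fun l _ => ⟨trivial, hr⟩)
  have hm_nn : ∀ r ∈ Ioc 0 t, 0 ≤ QQ F r m := by
    intro r hr
    have hc : Continuous (fun l => QQ F r l) := continuousOn_univ.1 (hcl r ⟨hr.1.le, hr.2⟩)
    have htd : Tendsto (fun l => QQ F r l) (𝓝[>] m) (𝓝 (QQ F r m)) :=
      hc.continuousAt.tendsto.mono_left nhdsWithin_le_nhds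
    refine ge_of_tendsto htd ?_
    filter_upwards [self_mem_nhdsWithin] with l hl
    exact (habove l hl r hr).le
  have hQt : QQ F t m ≤ 0 := by
    rcases hm0.eq_or_lt with h | h
    · rw [← h]; simp [QQ, cc, F_zero hF]
    rcases hst.eq_or_lt with h' | h'
    · rw [← h']; exact hQ
    exfalso
    have hsp : 0 < s := by linarith
    have hQe : ∀ r, QQ F r m = (F r 0 m).1 := by intro r; unfold QQ; rw [cc_low hm2]
    have hz : (F s 0 m).1 = 0 := by
      rw [← hQe]; exact le_antisymm hQ (hm_nn s ⟨hsp, hst⟩)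
    have hmin : IsLocalMin (fun r => (F r 0 m).1) s := by
      filter_upwards [Ioo_mem_nhds hsp h'] with r hr
      rw [hz, ← hQe]; exact hm_nn r ⟨hr.1, hr.2.le⟩
    have hp := hmin.hasDerivAt_eq_zero ((hF 0 m).1.1 s)
    have hE := F_energy hF 0 m s
    simp only at hp
    rw [hp, hz] at hE
    nlinarith
  have hL : x ≤ QQ F t (x + 2) := by
    have := q_ge hF x ht
    have h6 : QQ F t (x + 2) = (F t x 2).1 := by unfold QQ; rw [cc_high (by linarith)]; simp
    linarith
  obtain ⟨l, hl, hlx⟩ := intermediate_value_Icc (show m ≤ x + 2 by linarith)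
    ((hcl t ⟨ht.le, le_rfl⟩).mono (subset_univ _)) (show x ∈ Icc _ _ from ⟨by linarith, hL⟩)
  have hml : m < l := by
    rcases hl.1.eq_or_lt with h | h
    · exfalso; simp only at hlx; rw [← h] at hlx; linarith
    · exact h
  exact ⟨l, by linarith, hlx, fun r hr => habove l hml r ⟨hr.1, hr.2.le⟩⟩

lemma first_zero {h k : ℝ → ℝ} (hd : ∀ s, HasDerivAt h (k s) s) {e t : ℝ} (he : 0 < e)
    (hpos : ∀ s ∈ Ioc 0 e, 0 < h s) (ht : 0 < t) (hz : h t = 0) :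
    ∃ r, 0 < r ∧ r ≤ t ∧ h r = 0 ∧ (∀ s ∈ Ioo 0 r, 0 < h s) ∧ k r ≤ 0 := by
  have hc : Continuous h := continuous_iff_continuousAt.2 fun s => (hd s).continuousAt
  have het : e < t := by
    by_contra h'
    have := hpos t ⟨ht, not_lt.1 h'⟩
    linarith
  have hK : IsCompact (Icc e t ∩ h ⁻¹' {0}) :=
    isCompact_Icc.inter_right (isClosed_singleton.preimage hc)
  obtain ⟨r, hr⟩ := hK.exists_isLeast ⟨t, ⟨het.le, le_rfl⟩, hz⟩
  have hr0 : h r = 0 := hr.1.2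
  have her : e ≤ r := hr.1.1.1
  have hrt : r ≤ t := hr.1.1.2
  have hp : ∀ s ∈ Ioo 0 r, 0 < h s := by
    intro s hs
    by_contra hn
    push Not at hn
    have hes : e ≤ s := by
      by_contra h'
      have := hpos s ⟨hs.1, (not_le.1 h').le⟩
      linarith
    obtain ⟨w, hw, hw0⟩ := intermediate_value_Icc' hes hc.continuousOn
      (show (0:ℝ) ∈ Icc _ _ from ⟨hn, (hpos e ⟨he, le_rfl⟩).le⟩)
    have := hr.2 (show w ∈ Icc e t ∩ h ⁻¹' {0} from ⟨⟨hw.1, by linarith [hw.2, hs.2]⟩, hw0⟩)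
    linarith [hw.2, hs.2]
  refine ⟨r, by linarith, hrt, hr0, hp, ?_⟩
  have hsl := (hasDerivAt_iff_tendsto_slope_left_right.1 (hd r)).1
  refine le_of_tendsto hsl ?_
  filter_upwards [Ioo_mem_nhdsLT (show 0 < r by linarith)] with s hs
  rw [slope_def_field, hr0, sub_zero]
  exact div_nonpos_of_nonneg_of_nonpos (hp s hs).le (by linarith [hs.2])

lemma no_cross (hF : IsHSFlow F) {t x l m : ℝ} (ht : 0 < t) (hx : 0 < x) (hl : 0 < l)
    (hlm : l < m) (h1 : QQ F t l = x) (h2 : QQ F t m = x)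
    (p1 : ∀ s ∈ Ioo 0 t, 0 < QQ F s l) : False := by
  have hd : ∀ s, HasDerivAt (fun s => QQ F s m - QQ F s l)
      ((F s (cc m).1 (cc m).2).2 - (F s (cc l).1 (cc l).2).2) s := fun s =>
    ((hF (cc m).1 (cc m).2).1.1 s).sub ((hF (cc l).1 (cc l).2).1.1 s)
  have hc : Continuous (fun s => QQ F s m - QQ F s l) :=
    continuous_iff_continuousAt.2 fun s => (hd s).continuousAt
  have hE : ∃ e > 0, ∀ s ∈ Ioc 0 e, 0 < QQ F s m - QQ F s l := by
    suffices hev : ∀ᶠ s in 𝓝[>] (0:ℝ), 0 < QQ F s m - QQ F s l by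
      obtain ⟨u, hu, hsub⟩ := (mem_nhdsGT_iff_exists_Ioc_subset).1 hev
      exact ⟨u, hu, fun s hs => hsub hs⟩
    rcases le_or_gt m 2 with hm | hm
    · have hs0 : QQ F 0 m - QQ F 0 l = 0 := by
        unfold QQ; rw [cc_low hm, cc_low (by linarith), (hF _ _).2, (hF _ _).2]; simp
      have hsl := (hasDerivAt_iff_tendsto_slope_left_right.1 (hd 0)).2
      have hk : 0 < (F 0 (cc m).1 (cc m).2).2 - (F 0 (cc l).1 (cc l).2).2 := by
        rw [cc_low hm, cc_low (by linarith), (hF _ _).2, (hF _ _).2]; simpa using hlm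
      filter_upwards [hsl.eventually (lt_mem_nhds hk), self_mem_nhdsWithin] with s hs hs'
      have hs' : 0 < s := hs'
      rw [slope_def_field, hs0, sub_zero, sub_zero] at hs
      exact (div_pos_iff_of_pos_right hs').1 hs
    · have hs0 : 0 < QQ F 0 m - QQ F 0 l := by
        unfold QQ; rw [(hF _ _).2, (hF _ _).2, cc_high hm.le]
        simp [cc]
        exact ⟨hlm, hm⟩
      exact (hc.continuousAt.eventually (lt_mem_nhds hs0)).filter_mono nhdsWithin_le_nhds
  obtain ⟨e, he, hpe⟩ := hE
  obtain ⟨r, hr0, hrt, hrz, hrp, hrk⟩ := first_zero hd he hpe ht (by rw [h1, h2, sub_self])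
  have hqq : QQ F r m = QQ F r l := by linarith
  have hql : 0 < QQ F r l := by
    rcases hrt.eq_or_lt with h | h
    · rw [h, h1]; exact hx
    · exact p1 r ⟨hr0, h⟩
  have hne : (F r (cc m).1 (cc m).2).2 ≠ (F r (cc l).1 (cc l).2).2 := by
    intro h
    obtain ⟨e1, e2⟩ := F_unique hF (Prod.ext hqq h)
    have key : ∀ u, (cc u).1 + (cc u).2 = u := by
      intro u
      rcases le_total u 2 with h | h
      · rw [cc_low h]; simp
      · rw [cc_high h]; simp
    have := key m
    rw [e1, e2, key l] at this
    linarith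
  have hlt := lt_of_le_of_ne (sub_nonpos.1 hrk) hne
  have hEm := F_energy hF (cc m).1 (cc m).2 r
  have hEl := F_energy hF (cc l).1 (cc l).2 r
  change (F r (cc m).1 (cc m).2).1 = (F r (cc l).1 (cc l).2).1 at hqq
  rw [hqq] at hEm
  rcases le_or_gt m 2 with hm | hm
  · have hl2 : l ≤ 2 := by linarith
    let W : ℝ → ℝ := fun s => QQ F s l * (F s (cc m).1 (cc m).2).2
      - QQ F s m * (F s (cc l).1 (cc l).2).2
    have hW : ∀ s, HasDerivAt W (QQ F s m * g' (QQ F s l) - QQ F s l * g' (QQ F s m)) s := by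
      intro s
      have := (((hF (cc l).1 (cc l).2).1.1 s).mul ((hF (cc m).1 (cc m).2).1.2 s)).sub
        (((hF (cc m).1 (cc m).2).1.1 s).mul ((hF (cc l).1 (cc l).2).1.2 s))
      refine this.congr_deriv ?_
      simp only [QQ]; ring
    have hmono : MonotoneOn W (Icc 0 r) := by
      apply monotoneOn_of_deriv_nonneg (convex_Icc 0 r)
        (fun s _ => (hW s).continuousAt.continuousWithinAt)
        (fun s _ => (hW s).differentiableAt.differentiableWithinAt)
      intro s hs
      rw [interior_Icc] at hs
      rw [(hW s).deriv, g'_eq, g'_eq]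
      have a1 := p1 s ⟨hs.1, by linarith [hs.2]⟩
      have a2 := hrp s hs
      have a3 := pow_le_pow_left₀ (mm_nonneg _)
        (mm_anti a1.le (show QQ F s l ≤ QQ F s m by linarith)) 3
      have a4 : 0 < QQ F s m := by linarith
      have := mul_nonneg (mul_pos a1 a4).le (sub_nonneg.2 a3)
      linarith
    have hW0 : W 0 = 0 := by
      simp only [W, QQ]
      rw [cc_low hm, cc_low hl2, (hF _ _).2, (hF _ _).2]; simp
    have hWr := hmono ⟨le_rfl, hr0.le⟩ ⟨hr0.le, le_rfl⟩ hr0.le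
    rw [hW0] at hWr
    simp only [W] at hWr
    have : QQ F r m = QQ F r l := hqq
    rw [this] at hWr
    nlinarith
  · have hpm : 0 < (F r (cc m).1 (cc m).2).2 := by
      rw [cc_high hm.le]; exact p_pos hF _ _
    have hen : (cc l).2 ^ 2 / 2 + g (cc l).1 ≤ (cc m).2 ^ 2 / 2 + g (cc m).1 := by
      rcases le_total l 2 with h | h
      · rw [cc_low h, cc_high hm.le]
        have := g_nonneg (m - 2)
        simp only [g_zero]; nlinarith
      · rw [cc_high h, cc_high hm.le]
        have := g_mono (show 0 ≤ l - 2 by linarith) (show l - 2 ≤ m - 2 by linarith)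
        simp only; linarith
    nlinarith

end flow

/-- Lemma ce5, existence and uniqueness: for every `(t, x) ∈ (0,∞)²` there is a unique
`(q₀, p₀) ∈ ([0,∞) × {2}) ∪ ({0} × (0,2])` with `F_q(t, q₀, p₀) = x` and
`F_q(s, q₀, p₀) > 0` for all `s ∈ (0, t)`; this defines the map `Δ`. -/
theorem stmt_8 (F : ℝ → ℝ → ℝ → ℝ × ℝ) (hF : IsHSFlow F) :
    (∀ t x : ℝ, 0 < t → 0 < x →
      ∃! qp : ℝ × ℝ, qp ∈ Dset ∧ (F t qp.1 qp.2).1 = x ∧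
        ∀ s ∈ Ioo (0:ℝ) t, 0 < (F s qp.1 qp.2).1) ∧
    ∃ Δ : ℝ → ℝ → ℝ × ℝ, IsDeltaMap F Δ := by
  have hex : ∀ t x : ℝ, 0 < t → 0 < x →
      ∃! qp : ℝ × ℝ, qp ∈ Dset ∧ (F t qp.1 qp.2).1 = x ∧
        ∀ s ∈ Ioo (0:ℝ) t, 0 < (F s qp.1 qp.2).1 := by
    intro t x ht hx
    obtain ⟨l, hl, hlx, hlp⟩ := exists_L hF ht hx
    refine ⟨cc l, ⟨cc_mem hl, hlx, hlp⟩, ?_⟩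
    rintro z ⟨hz, hzx, hzp⟩
    obtain ⟨m, hm, rfl⟩ := mem_Dset hz
    rcases lt_trichotomy m l with h | h | h
    · exact (no_cross hF ht hx hm h hzx hlx hzp).elim
    · rw [h]
    · exact (no_cross hF ht hx hl h hlx hzx hlp).elim
  refine ⟨hex, ?_⟩
  have h' : ∀ t x : ℝ, ∃ qp : ℝ × ℝ, 0 < t → 0 < x → (qp ∈ Dset ∧ (F t qp.1 qp.2).1 = x ∧
        ∀ s ∈ Ioo (0:ℝ) t, 0 < (F s qp.1 qp.2).1) := by
    intro t x
    by_cases h : 0 < t ∧ 0 < x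
    · obtain ⟨z, hz, -⟩ := hex t x h.1 h.2
      exact ⟨z, fun _ _ => hz⟩
    · exact ⟨0, fun h1 h2 => (h ⟨h1, h2⟩).elim⟩
  choose D hD using h'
  exact ⟨D, hD⟩
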